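/- arXiv:2302.07688 — 2 statements merged into one kernel-verified Lean document; each statement's English description precedes it below -/
import Mathlib

section
/- Let n, m, t be natural numbers with t ≤ n, let S ⊆ Fin n with |S| = t, let ε ≥ 0, and let 𝓖 be a nonempty finite ε-almost-universal₂ family of functions from (Fin n → ZMod 2) to (Fin m → ZMod 2). On the probability space Ω = (Fin n → ZMod 2) × 𝓖 with the uniform measure, define the random variables K_au(x, g) = g(x), E(x, g) = the restriction of x to S, and G(x, g) = g. Then the mutual information (in nats) between the authentication key and the eavesdropper's view satisfies I[K_au : (E, G)] ≤ ln( 2^{m+t}/2^n + 2^m · ε ). -/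
/-- A finite family `𝓖` of functions from `R` to `T` is `ε`-almost-universal₂. -/
def AlmostUniversal₂ {R T : Type*} [DecidableEq T] (ε : ℝ) (𝓖 : Finset (R → T)) : Prop :=
  ∀ r r' : R, r ≠ r' →
    (((𝓖.filter fun g => g r = g r').card : ℝ) / (𝓖.card : ℝ)) ≤ ε

/-- Mutual information (in nats) between the finitely-valued random variables `X` and `Y`
on a finite probability space with probability mass function `P`. -/
noncomputable def mutualInfo {Ω A B : Type*} [Fintype Ω] [Fintype A] [Fintype B]
    [DecidableEq A] [DecidableEq B] (P : Ω → ℝ) (X : Ω → A) (Y : Ω → B) : ℝ :=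
  ∑ a : A, ∑ b : B,
    (∑ ω ∈ Finset.univ.filter (fun ω => X ω = a ∧ Y ω = b), P ω) *
      Real.log
        ((∑ ω ∈ Finset.univ.filter (fun ω => X ω = a ∧ Y ω = b), P ω) /
          ((∑ ω ∈ Finset.univ.filter (fun ω => X ω = a), P ω) *
            (∑ ω ∈ Finset.univ.filter (fun ω => Y ω = b), P ω)))

/-!
Expand the mutual information as `H(X) - H(X | Y)`. The entropy of `X` is at most `log |A|`, where
`A` is its alphabet, and by Jensen's inequality `-H(X | Y)` is at most the logarithm of the
probability that two copies of `X`, conditionally independent given `Y`, coincide.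

For a hashed key the eavesdropper knows the hash function and the block `s` of the leakage partition
containing the raw key, so the two copies coincide when two independent uniform elements of `s` are
hashed alike. On average over the family this has probability at most `1 / |s| + ε`: either the two
elements are equal or almost-universality applies. Weighting `1 / |s|` by the probability
`|s| / |R|` of the block and summing over the at most `|E|` blocks gives `|E| / |R| + ε`.
-/

section

open Finset

variable {Ω A B G R T E : Type*}

lemma sum_mul_log_le_log_sum_mul {ι : Type*} {s : Finset ι} {w z : ι → ℝ}
    (hw : ∀ i ∈ s, 0 ≤ w i) (hw_sum : ∑ i ∈ s, w i = 1) (hz : ∀ i ∈ s, 0 < w i → 0 < z i) :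
    ∑ i ∈ s, w i * Real.log (z i) ≤ Real.log (∑ i ∈ s, w i * z i) := by
  classical
  have sum_support (f : ι → ℝ) : ∑ i ∈ s with w i ≠ 0, w i * f i = ∑ i ∈ s, w i * f i :=
    sum_filter_of_ne fun _ _ => left_ne_zero_of_mul
  rw [← sum_support, ← sum_support]
  refine strictConcaveOn_log_Ioi.concaveOn.le_map_sum (fun i hi => hw i (mem_filter.1 hi).1)
    ((sum_filter_ne_zero s).trans hw_sum) fun i hi => ?_
  obtain ⟨his, hi0⟩ := mem_filter.1 hi
  exact hz i his ((hw i his).lt_of_ne' hi0)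

lemma sum_negMulLog_le_log_card [Fintype A] {w : A → ℝ} (hw : ∀ a, 0 ≤ w a)
    (hw_sum : ∑ a, w a = 1) : ∑ a, Real.negMulLog (w a) ≤ Real.log (Fintype.card A) := by
  have : Nonempty A := not_isEmpty_iff.1 fun _ => by simp at hw_sum
  have card_pos : (0 : ℝ) < Fintype.card A := Nat.cast_pos.2 Fintype.card_pos
  have jensen := Real.concaveOn_negMulLog.le_map_sum (t := univ)
    (w := fun _ => (Fintype.card A : ℝ)⁻¹) (fun _ _ => by positivity) (by simp) fun a _ => hw a
  simp only [smul_eq_mul, ← mul_sum, hw_sum, mul_one, Real.negMulLog, Real.log_inv, neg_mul_neg]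
    at jensen ⊢
  exact le_of_mul_le_mul_left jensen (inv_pos.2 card_pos)

/-- The distribution of the random variable `X` under the mass function `P`, which is not required
to be normalised. -/
def law [Fintype Ω] [DecidableEq A] (P : Ω → ℝ) (X : Ω → A) (a : A) : ℝ :=
  ∑ ω with X ω = a, P ω

/-- The conditional collision probability `∑_b P(Y = b) ∑_a P(X = a | Y = b) ^ 2`: two copies of `X`
that are conditionally independent given `Y` coincide with this probability. For a mass function `P`
that is not normalised it scales linearly with `P`. Values `b` of probability zero contribute `0`
because of `x / 0 = 0`. -/
noncomputable def condCollisionProb [Fintype Ω] [Fintype A] [Fintype B] [DecidableEq A]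
    [DecidableEq B] (P : Ω → ℝ) (X : Ω → A) (Y : Ω → B) : ℝ :=
  ∑ b, ∑ a, law P (fun ω => (X ω, Y ω)) (a, b) ^ 2 / law P Y b

section Law

variable [Fintype Ω] [DecidableEq A] [DecidableEq B] {P : Ω → ℝ}

lemma law_nonneg (hP : ∀ ω, 0 ≤ P ω) (X : Ω → A) (a : A) : 0 ≤ law P X a :=
  sum_nonneg fun ω _ => hP ω

lemma law_const (c : ℝ) (X : Ω → A) (a : A) : law (fun _ => c) X a = #{ω | X ω = a} * c := by
  rw [law, sum_const, nsmul_eq_mul]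

lemma sum_law [Fintype A] (P : Ω → ℝ) (X : Ω → A) : ∑ a, law P X a = ∑ ω, P ω :=
  sum_fiberwise univ X P

lemma sum_law_prodMk [Fintype B] (P : Ω → ℝ) (X : Ω → A) (Y : Ω → B) (a : A) :
    ∑ b, law P (fun ω => (X ω, Y ω)) (a, b) = law P X a := by
  simp only [law, Prod.mk.injEq, ← filter_filter]
  exact sum_fiberwise _ Y P

lemma law_prodMk_le_left (hP : ∀ ω, 0 ≤ P ω) (X : Ω → A) (Y : Ω → B) (a : A) (b : B) :
    law P (fun ω => (X ω, Y ω)) (a, b) ≤ law P X a :=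
  sum_le_sum_of_subset_of_nonneg
    (monotone_filter_right _ fun _ _ h => (Prod.mk.inj h).1) fun ω _ _ => hP ω

lemma law_prodMk_le_right (hP : ∀ ω, 0 ≤ P ω) (X : Ω → A) (Y : Ω → B) (a : A) (b : B) :
    law P (fun ω => (X ω, Y ω)) (a, b) ≤ law P Y b :=
  sum_le_sum_of_subset_of_nonneg
    (monotone_filter_right _ fun _ _ h => (Prod.mk.inj h).2) fun ω _ _ => hP ω

lemma law_prodMk_snd [Fintype G] [DecidableEq G] (P : Ω × G → ℝ) (X : Ω × G → A) (a : A) (g : G) :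
    law P (fun ω => (X ω, ω.2)) (a, g) = law (fun x => P (x, g)) (fun x => X (x, g)) a := by
  simp only [law, sum_filter, Fintype.sum_prod_type, Prod.mk.injEq, and_comm (b := _ = g), ite_and,
    sum_ite_eq', mem_univ, if_true]

end Law

section MutualInfo

variable [Fintype Ω] [Fintype A] [Fintype B] [DecidableEq A] [DecidableEq B] {P : Ω → ℝ}

lemma mutualInfo_eq_sum_law (P : Ω → ℝ) (X : Ω → A) (Y : Ω → B) :
    mutualInfo P X Y = ∑ z : A × B, law P (fun ω => (X ω, Y ω)) z *
      Real.log (law P (fun ω => (X ω, Y ω)) z / (law P X z.1 * law P Y z.2)) := by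
  simp only [mutualInfo, law, Fintype.sum_prod_type, Prod.mk.injEq]

lemma mutualInfo_eq_sum_negMulLog_add (hP : ∀ ω, 0 ≤ P ω) (X : Ω → A) (Y : Ω → B) :
    mutualInfo P X Y = ∑ a, Real.negMulLog (law P X a) +
      ∑ z : A × B, law P (fun ω => (X ω, Y ω)) z *
        Real.log (law P (fun ω => (X ω, Y ω)) z / law P Y z.2) := by
  set p := law P (fun ω => (X ω, Y ω))
  have log_split (z : A × B) : p z * Real.log (p z / (law P X z.1 * law P Y z.2)) =
      p z * -Real.log (law P X z.1) + p z * Real.log (p z / law P Y z.2) := by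
    obtain hz | hz := (law_nonneg hP _ z : 0 ≤ p z).eq_or_lt
    · simp only [p, ← hz, zero_mul, add_zero]
    have hX : 0 < law P X z.1 := hz.trans_le (law_prodMk_le_left hP X Y _ _)
    have hY : 0 < law P Y z.2 := hz.trans_le (law_prodMk_le_right hP X Y _ _)
    rw [div_mul_eq_div_div_swap, Real.log_div (by positivity) hX.ne']
    ring
  have entropy_eq : ∑ z, p z * -Real.log (law P X z.1) = ∑ a, Real.negMulLog (law P X a) := by
    simp only [p, Fintype.sum_prod_type, ← sum_mul, sum_law_prodMk, Real.negMulLog, neg_mul_comm]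
  rw [mutualInfo_eq_sum_law, sum_congr rfl fun z _ => log_split z, sum_add_distrib, entropy_eq]

lemma condCollisionProb_pos (hP : ∀ ω, 0 ≤ P ω) (hP_sum : 0 < ∑ ω, P ω) (X : Ω → A) (Y : Ω → B) :
    0 < condCollisionProb P X Y := by
  have joint_nonneg := law_nonneg hP fun ω => (X ω, Y ω)
  have term_nonneg (b : B) (a : A) : 0 ≤ law P (fun ω => (X ω, Y ω)) (a, b) ^ 2 / law P Y b :=
    div_nonneg (sq_nonneg _) (law_nonneg hP Y b)
  obtain ⟨⟨a, b⟩, -, hab⟩ := (sum_pos_iff_of_nonneg fun z _ => joint_nonneg z).1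
    (hP_sum.trans_eq (sum_law P _).symm)
  have hb : 0 < law P Y b := hab.trans_le (law_prodMk_le_right hP X Y a b)
  exact sum_pos' (fun b _ => sum_nonneg fun a _ => term_nonneg b a) ⟨b, mem_univ b,
    sum_pos' (fun a _ => term_nonneg b a) ⟨a, mem_univ a, by positivity⟩⟩

theorem mutualInfo_le_log_card_mul_condCollisionProb (hP : ∀ ω, 0 ≤ P ω) (hP_sum : ∑ ω, P ω = 1)
    (X : Ω → A) (Y : Ω → B) :
    mutualInfo P X Y ≤ Real.log (Fintype.card A * condCollisionProb P X Y) := by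
  set p := law P (fun ω => (X ω, Y ω)) with p_def
  have : Nonempty Ω := not_isEmpty_iff.1 fun _ => by simp at hP_sum
  have : Nonempty A := .map X ‹_›
  have entropy_le : ∑ a, Real.negMulLog (law P X a) ≤ Real.log (Fintype.card A) :=
    sum_negMulLog_le_log_card (law_nonneg hP X) ((sum_law P X).trans hP_sum)
  have neg_condEntropy_le :
      ∑ z, p z * Real.log (p z / law P Y z.2) ≤ Real.log (condCollisionProb P X Y) := by
    refine (sum_mul_log_le_log_sum_mul (fun z _ => law_nonneg hP _ z) ((sum_law P _).trans hP_sum)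
      fun z _ hz => div_pos hz (hz.trans_le (law_prodMk_le_right hP X Y _ _))).trans_eq ?_
    simp only [condCollisionProb, ← p_def, Fintype.sum_prod_type_right, sq, mul_div_assoc]
  rw [mutualInfo_eq_sum_negMulLog_add hP,
    Real.log_mul (by positivity) (condCollisionProb_pos hP (one_pos.trans_eq hP_sum.symm) X Y).ne']
  exact add_le_add entropy_le neg_condEntropy_le

end MutualInfo

/-- The number of ordered pairs in `s`, diagonal included, on which `f` takes equal values. Divided
by `#s ^ 2` it is the collision probability of `f` at two independent uniform elements of `s`. -/
def collisionCount [DecidableEq T] (f : R → T) (s : Finset R) : ℕ :=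
  #{p ∈ s ×ˢ s | f p.1 = f p.2}

lemma sum_sq_card_fiber [Fintype T] [DecidableEq T] (f : R → T) (s : Finset R) :
    ∑ a, #{x ∈ s | f x = a} ^ 2 = collisionCount f s := by
  calc ∑ a, #{x ∈ s | f x = a} ^ 2
      = ∑ a, ∑ x ∈ s with f x = a, #{y ∈ s | f y = a} := by simp [sq]
    _ = ∑ x ∈ s, #{y ∈ s | f y = f x} := sum_fiberwise' s f fun a => #{y ∈ s | f y = a}
    _ = collisionCount f s := by simp only [collisionCount, card_filter, sum_product_right]

section Hashing

variable [DecidableEq T] {ε : ℝ} {𝓖 : Finset (R → T)}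

lemma AlmostUniversal₂.card_filter_apply_eq_le (hAU : AlmostUniversal₂ ε 𝓖) {r r' : R}
    (hr : r ≠ r') : (#{g ∈ 𝓖 | g r = g r'} : ℝ) ≤ #𝓖 * ε := by
  obtain rfl | h𝓖 := 𝓖.eq_empty_or_nonempty
  · simp
  · exact (div_le_iff₀' (Nat.cast_pos.2 h𝓖.card_pos)).1 (hAU r r' hr)

lemma AlmostUniversal₂.sum_collisionCount_le (hAU : AlmostUniversal₂ ε 𝓖) (hε : 0 ≤ ε)
    (s : Finset R) :
    (∑ g ∈ 𝓖, collisionCount g s : ℝ) ≤ #𝓖 * (#s + #s ^ 2 * ε) := by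
  classical
  have diag_le : ∑ p ∈ s.diag, (#{g ∈ 𝓖 | g p.1 = g p.2} : ℝ) ≤ #s * #𝓖 := by
    simp
  have offDiag_le : ∑ p ∈ s.offDiag, (#{g ∈ 𝓖 | g p.1 = g p.2} : ℝ) ≤ #s ^ 2 * (#𝓖 * ε) := by
    calc ∑ p ∈ s.offDiag, (#{g ∈ 𝓖 | g p.1 = g p.2} : ℝ)
        ≤ #s.offDiag * (#𝓖 * ε) := by
          rw [← nsmul_eq_mul]
          exact sum_le_card_nsmul _ _ _ fun p hp =>
            hAU.card_filter_apply_eq_le (mem_offDiag.1 hp).2.2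
      _ ≤ #s ^ 2 * (#𝓖 * ε) := by
          gcongr
          rw [offDiag_card, sq]
          exact_mod_cast Nat.sub_le _ _
  calc (∑ g ∈ 𝓖, collisionCount g s : ℝ)
      = ∑ p ∈ s ×ˢ s, (#{g ∈ 𝓖 | g p.1 = g p.2} : ℝ) := by
        simp only [collisionCount, card_filter, Nat.cast_sum]
        exact sum_comm
    _ = ∑ p ∈ s.diag, (#{g ∈ 𝓖 | g p.1 = g p.2} : ℝ) +
          ∑ p ∈ s.offDiag, (#{g ∈ 𝓖 | g p.1 = g p.2} : ℝ) := by
        rw [← sum_union (disjoint_diag_offDiag s), diag_union_offDiag]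
    _ ≤ #𝓖 * (#s + #s ^ 2 * ε) := by linarith

end Hashing

section CondCollisionProb

variable [Fintype A] [Fintype B] [DecidableEq A] [DecidableEq B]

lemma condCollisionProb_const [Fintype Ω] (c : ℝ) (X : Ω → A) (Y : Ω → B) :
    condCollisionProb (fun _ => c) X Y =
      c * ∑ b, (collisionCount X {ω | Y ω = b} : ℝ) / #{ω | Y ω = b} := by
  obtain rfl | hc := eq_or_ne c 0
  · simp [condCollisionProb, law_const]
  have joint_count (a : A) (b : B) :
      #{ω | (X ω, Y ω) = (a, b)} = #{ω ∈ ({ω | Y ω = b} : Finset Ω) | X ω = a} := by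
    simp only [filter_filter, Prod.mk.injEq, and_comm]
  simp only [condCollisionProb, law_const, joint_count, ← sum_sq_card_fiber, Nat.cast_sum,
    Nat.cast_pow, sum_div, mul_sum]
  refine sum_congr rfl fun b _ => sum_congr rfl fun a _ => ?_
  field_simp

lemma condCollisionProb_prodMk_snd [Fintype Ω] [Fintype G] [DecidableEq G] (P : Ω × G → ℝ)
    (X : Ω × G → A) (Y : Ω × G → B) :
    condCollisionProb P X (fun ω => (Y ω, ω.2)) =
      ∑ g, condCollisionProb (fun x => P (x, g)) (fun x => X (x, g)) (fun x => Y (x, g)) := by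
  have law_assoc (a : A) (b : B) (g : G) : law P (fun ω => (X ω, Y ω, ω.2)) (a, b, g) =
      law P (fun ω => ((X ω, Y ω), ω.2)) ((a, b), g) := by
    simp only [law, Prod.mk.injEq, and_assoc]
  simp only [condCollisionProb, law_assoc, law_prodMk_snd, Fintype.sum_prod_type_right]

end CondCollisionProb

section HashedKey

variable [Fintype R] [Nonempty R] [Fintype T] [DecidableEq T] [Fintype E] [DecidableEq E] {ε : ℝ}
  {𝓖 : Finset (R → T)}

lemma AlmostUniversal₂.condCollisionProb_le (hAU : AlmostUniversal₂ ε 𝓖) (hε : 0 ≤ ε)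
    (h𝓖 : 𝓖.Nonempty) (V : R → E) :
    condCollisionProb (fun _ : R × 𝓖 => (Fintype.card (R × 𝓖) : ℝ)⁻¹)
        (fun ω => (ω.2 : R → T) ω.1) (fun ω => (V ω.1, ω.2)) ≤
      Fintype.card E / Fintype.card R + ε := by
  set N := (Fintype.card (R × 𝓖) : ℝ) with N_def
  have card_pos : (0 : ℝ) < #𝓖 := Nat.cast_pos.2 h𝓖.card_pos
  have block_le (e : E) : (∑ g ∈ 𝓖, collisionCount g {x | V x = e} : ℝ) / #{x | V x = e} ≤
      #𝓖 * (1 + #{x | V x = e} * ε) := by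
    refine div_le_of_le_mul₀ (by positivity) (by positivity)
      ((hAU.sum_collisionCount_le hε _).trans_eq ?_)
    ring
  have sum_blocks : ∑ e, (#{x | V x = e} : ℝ) = Fintype.card R := by
    exact_mod_cast (card_eq_sum_card_fiberwise fun x _ => mem_univ (V x)).symm
  calc condCollisionProb (fun _ : R × 𝓖 => N⁻¹)
        (fun ω => (ω.2 : R → T) ω.1) (fun ω => (V ω.1, ω.2))
      = ∑ g : 𝓖, N⁻¹ * ∑ e, (collisionCount (g : R → T) {x | V x = e} : ℝ) / #{x | V x = e} := by
        simp only [condCollisionProb_prodMk_snd _ _ fun ω : R × 𝓖 => V ω.1,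
          condCollisionProb_const]
    _ = N⁻¹ * ∑ e, (∑ g ∈ 𝓖, collisionCount g {x | V x = e} : ℝ) / #{x | V x = e} := by
        simp only [← mul_sum, sum_div, ← sum_coe_sort 𝓖]
        rw [sum_comm]
    _ ≤ N⁻¹ * ∑ e, #𝓖 * (1 + #{x | V x = e} * ε) := by
        gcongr with e
        exact block_le e
    _ = N⁻¹ * (#𝓖 * (Fintype.card E + Fintype.card R * ε)) := by
        simp only [← mul_sum, sum_add_distrib, ← sum_mul, sum_blocks, sum_const, card_univ,
          nsmul_eq_mul, mul_one]
    _ = Fintype.card E / Fintype.card R + ε := by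
        rw [N_def, Fintype.card_prod, Fintype.card_coe, Nat.cast_mul]
        field_simp

theorem stmt_5_general (hε : 0 ≤ ε) (h𝓖 : 𝓖.Nonempty) (hAU : AlmostUniversal₂ ε 𝓖) (V : R → E) :
    mutualInfo (fun _ : R × 𝓖 => (Fintype.card (R × 𝓖) : ℝ)⁻¹)
        (fun ω => (ω.2 : R → T) ω.1) (fun ω => (V ω.1, ω.2)) ≤
      Real.log (Fintype.card T * (Fintype.card E / Fintype.card R + ε)) := by
  have : Nonempty 𝓖 := h𝓖.to_subtype
  have : Nonempty T := .map (fun g : 𝓖 => (g : R → T) (Classical.arbitrary R)) ‹_›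
  have uniform_nonneg : ∀ _ : R × 𝓖, 0 ≤ (Fintype.card (R × 𝓖) : ℝ)⁻¹ := fun _ => by positivity
  have uniform_sum : ∑ _ : R × 𝓖, (Fintype.card (R × 𝓖) : ℝ)⁻¹ = 1 := by
    rw [sum_const, card_univ, nsmul_eq_mul, mul_inv_cancel₀ (by positivity)]
  refine (mutualInfo_le_log_card_mul_condCollisionProb uniform_nonneg uniform_sum _ _).trans
    (Real.log_le_log (mul_pos (by positivity) ?_) ?_)
  · exact condCollisionProb_pos uniform_nonneg (one_pos.trans_eq uniform_sum.symm) _ _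
  · gcongr
    exact hAU.condCollisionProb_le hε h𝓖 V

end HashedKey

end

/-- Substitution-attack bound (paper's equations (7)/(11)): with `x` uniform on `n`-bit
strings and `g` uniform on an `ε`-almost-universal₂ family `𝓖` (jointly uniform on the
product), the mutual information between `K_au = g(x)` and the eavesdropper's view
`(x|_S, g)` is at most `ln(2^{m+t}/2^n + 2^m·ε)`. -/
theorem stmt_5 (n m t : ℕ) (ht : t ≤ n) (S : Finset (Fin n)) (hS : S.card = t)
    (ε : ℝ) (hε : 0 ≤ ε)
    (𝓖 : Finset ((Fin n → ZMod 2) → (Fin m → ZMod 2))) (h𝓖 : 𝓖.Nonempty)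
    (hAU : AlmostUniversal₂ ε 𝓖) :
    mutualInfo
      (fun _ : (Fin n → ZMod 2) × {g // g ∈ 𝓖} =>
        (Fintype.card ((Fin n → ZMod 2) × {g // g ∈ 𝓖}) : ℝ)⁻¹)
      (fun ω => (ω.2 : (Fin n → ZMod 2) → (Fin m → ZMod 2)) ω.1)
      (fun ω => ((fun i : {i // i ∈ S} => ω.1 i), ω.2))
      ≤ Real.log ((2 : ℝ) ^ (m + t) / (2 : ℝ) ^ n + (2 : ℝ) ^ m * ε) := by
  simpa [hS, ZMod.card, pow_add, mul_add, mul_div_assoc] using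
    stmt_5_general hε h𝓖 hAU fun x (i : S) => x i
end

section
/- Let G be a simple graph on a vertex type V, let u, v ∈ V, and let p_0, …, p_f be f+1 walks in G from u to v such that for all i ≠ j, the internal vertices of p_i and p_j are disjoint (i.e., (support of p_i \ {u, v}) ∩ (support of p_j \ {u, v}) = ∅). Then for every finite set M ⊆ V of vertices with |M| ≤ f, u ∉ M, and v ∉ M, there exists an index i such that the support of p_i is disjoint from M. -/
theorem exists_disjoint_of_encard_lt_card {ι α : Type*} {s : ι → Set α} {t : Set α}
    (hs : Pairwise fun i j => Disjoint (s i) (s j)) (ht : t.encard < ENat.card ι) :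
    ∃ i, Disjoint (s i) t := by
  by_contra! hmeet
  simp only [Set.not_disjoint_iff] at hmeet
  choose g hgs hgt using hmeet
  have g_injective : Function.Injective g := fun i j hij =>
    hs.eq (Set.not_disjoint_iff.2 ⟨g i, hgs i, hij ▸ hgs j⟩)
  have card_le : ENat.card ι ≤ t.encard :=
    ENat.card_le_card_of_injective (g_injective.codRestrict hgt)
  exact card_le.not_gt ht

theorem stmt_10_general {ι α : Type*} {s : ι → Set α} {c t : Set α}
    (hs : Pairwise fun i j => Disjoint (s i \ c) (s j \ c)) (hct : Disjoint c t)
    (ht : t.encard < ENat.card ι) : ∃ i, Disjoint (s i) t := by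
  obtain ⟨i, hi⟩ := exists_disjoint_of_encard_lt_card hs ht
  exact ⟨i, (hi.sup_left hct).mono_left (Set.subset_sdiff_union _ c)⟩

/-- Given `f+1` internally vertex-disjoint walks from `u` to `v` in a simple graph, for any
set `M` of at most `f` vertices avoiding `u` and `v`, some walk avoids `M` entirely. -/
theorem stmt_10 {V : Type*} [DecidableEq V] (G : SimpleGraph V) (u v : V) (f : ℕ)
    (p : Fin (f + 1) → G.Walk u v)
    (hdisj : ∀ i j, i ≠ j →
      (((p i).support.toFinset \ {u, v}) ∩ ((p j).support.toFinset \ {u, v})) = ∅)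
    (M : Finset V) (hM : M.card ≤ f) (hu : u ∉ M) (hv : v ∉ M) :
    ∃ i, ∀ x ∈ (p i).support, x ∉ M := by
  have internally_disjoint (i j : Fin (f + 1)) (hij : i ≠ j) :
      Disjoint ({x | x ∈ (p i).support} \ {u, v}) ({x | x ∈ (p j).support} \ {u, v}) := by
    simpa [← Finset.disjoint_iff_inter_eq_empty, ← Finset.disjoint_coe] using hdisj i j hij
  obtain ⟨i, hi⟩ := stmt_10_general (t := M) internally_disjoint (by simp [hu, hv])
    (by simpa using mod_cast Nat.lt_succ_of_le hM)
  exact ⟨i, fun _ hx => Set.disjoint_left.1 hi hx⟩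
end
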